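/- Let φ : ℝ → ℝ be slope restricted with slopes [μ, η], let λ : Fin n → ℝ have all entries strictly positive, let T be the diagonal matrix with diagonal λ, and let ψ : ℝⁿ → ℝⁿ apply φ componentwise, ψ(z)ᵢ = φ(zᵢ). Then for all z_a, z_b ∈ ℝⁿ, the stacked vector v = (ψ(z_a) − ψ(z_b), z_a − z_b) ∈ ℝ²ⁿ satisfies vᵀ P_slope v ≥ 0, where P_slope is the 2×2 block matrix [[−2T, (μ+η)T], [(μ+η)T, −2μηT]]. -/

import Mathlib

open Matrix

/-- If `φ` is slope restricted with slopes `[μ, η]`, `λ` has strictly positive entries,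
`T = diag λ`, and `ψ` applies `φ` componentwise, then for all `z_a, z_b` the stacked vector
`v = (ψ z_a − ψ z_b, z_a − z_b)` satisfies `vᵀ P_slope v ≥ 0`, where
`P_slope = [[−2T, (μ+η)T], [(μ+η)T, −2μηT]]`. -/
theorem slope_multiplier_quadratic_constraint
    {n : ℕ} (φ : ℝ → ℝ) (μ η : ℝ)
    (hφ : ∀ a b : ℝ, (μ * (a - b) - (φ a - φ b)) * ((φ a - φ b) - η * (a - b)) ≥ 0)
    (l : Fin n → ℝ) (hl : ∀ i, 0 < l i)
    (T : Matrix (Fin n) (Fin n) ℝ) (hT : T = Matrix.diagonal l)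
    (ψ : (Fin n → ℝ) → (Fin n → ℝ)) (hψ : ∀ z i, ψ z i = φ (z i))
    (Pslope : Matrix (Fin n ⊕ Fin n) (Fin n ⊕ Fin n) ℝ)
    (hP : Pslope = Matrix.fromBlocks ((-2 : ℝ) • T) ((μ + η) • T)
      ((μ + η) • T) ((-(2 * μ * η)) • T))
    (za zb : Fin n → ℝ) :
    (Sum.elim (ψ za - ψ zb) (za - zb)) ⬝ᵥ (Pslope *ᵥ (Sum.elim (ψ za - ψ zb) (za - zb))) ≥ 0 := by
  subst hT hP
  rw [Matrix.fromBlocks_mulVec]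
  simp only [dotProduct, Fintype.sum_sum_type, Sum.elim_inl, Sum.elim_inr, Sum.elim_comp_inl,
    Sum.elim_comp_inr, Pi.add_apply, Matrix.smul_mulVec, Pi.smul_apply, smul_eq_mul,
    Matrix.mulVec_diagonal, Pi.sub_apply, hψ]
  rw [← Finset.sum_add_distrib]
  refine Finset.sum_nonneg fun i _ => ?_
  have h := mul_nonneg (hl i).le (hφ (za i) (zb i))
  linarith
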